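/- arXiv:math-ph/0102016 — 2 statements merged into one kernel-verified Lean document; each statement's English description precedes it below -/
import Mathlib

section
/- Let X be a (not necessarily compact) finite-dimensional topological manifold (Hausdorff, second-countable, connected) and let E → X be a topological real vector bundle of finite rank. Then there exists a topological real vector bundle E' → X of finite rank and a natural number n such that the Whitney sum E ⊕ E' is isomorphic, as a topological vector bundle over X, to the trivial bundle X × ℝⁿ. -/
/-!
It suffices to find, for some `n`, a continuous family of injective linear maps
`s x : V x → ℝⁿ`: the complement `E'` is then the quotient bundle `ℝⁿ / s(E)`, and the exact
sequence `E → X × ℝⁿ → E'` splits because `X` is paracompact.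

*Existence of `s`.*  Let `k` be the rank of `E` and `n > d + k²`.  By Lindelöf and paracompactness
there are a sequence of charts of `X` over which `E` is trivial and a locally finite sequence of
bump functions `ρ i` with compact supports in them, such that the sets `{ρ i = 1}` cover `X`.
Starting from `s = 0`, the `i`-th step modifies `s` only on the support of `ρ i` and makes it
injective on `{ρ i = 1}` without destroying injectivity on the earlier sets
(`exists_injective_step`); local finiteness makes the sequence locally stationary.  In the chart
and the trivialization, `s` is a continuous map from a compact set to `Hom(F, ℝⁿ)`.  It is
approximated by a `C¹` map `p` on `ℝᵈ`, and by Sard's theorem in the dimension-counting form a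
small constant `M` makes `p y + M` injective for every `y`: a non-injective map factors through
`ℝᵏ⁻¹`, so the bad `M` form the `C¹` image of a space of dimension
`d + (k - 1)(n + k) < k n` (`exists_small_add_injective`).  Replacing `s` by
`s + ρ i • (p + M - s)` is harmless on the earlier sets because injectivity is an open condition,
hence stable under uniformly small perturbations over a compact set.  No bound on the covering
dimension of `X` is needed.

*The complement.*  At each `i : X` choose `J i : F' → ℝⁿ` such that `(s i, J i)` is an isomorphism
`V i × F' ≃ ℝⁿ`.  Then `(s x, J i)` is an isomorphism for `x` near `i`, and the `F'`-components
`coordQ` of the inverses, whose kernel is the range of `s x`, are trivializations of the quotient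
bundle (`quotientCore`).  Projections onto the range of `s x` form a convex set, so local ones
glue to a global continuous projection `Q` (`exists_projection`); the isomorphism is
`(v, w) ↦ s x v + (1 - Q x) (J x w)`.
-/

/-!
Whitney-sum complement theorem, topological case: for every topological real vector bundle
`E → X` of finite rank over a (not necessarily compact) finite-dimensional topological manifold
`X` (Hausdorff, second-countable, connected) there exist a topological finite-rank real vector
bundle `E' → X` and `n : ℕ` such that the Whitney sum `E ⊕ E'` is isomorphic, as a topological
vector bundle over `X`, to the trivial bundle `X × ℝⁿ`.  The isomorphism is formalized as a
family of fibrewise linear equivalences `(E ⊕ E')ₓ ≃ₗ[ℝ] ℝⁿ` inducing a continuous map of total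
spaces, covering the identity of `X`, whose (fibrewise linear) inverse is also continuous.
-/

open Bundle

noncomputable section

/-- A topological real vector bundle of finite rank over the topological manifold `X`,
bundled as a structure. -/
structure BundledTopVectorBundle (X : Type*) [TopologicalSpace X] where
  /-- the typical fibre -/
  F : Type
  [normedAddCommGroupF : NormedAddCommGroup F]
  [normedSpaceF : NormedSpace ℝ F]
  [finiteDimensionalF : FiniteDimensional ℝ F]
  /-- the fibres -/
  V : X → Type
  [addCommGroupV : ∀ x, AddCommGroup (V x)]
  [moduleV : ∀ x, Module ℝ (V x)]
  [topologicalSpaceV : ∀ x, TopologicalSpace (V x)]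
  [topologicalSpaceTotal : TopologicalSpace (Bundle.TotalSpace F V)]
  [fiberBundleV : FiberBundle F V]
  [vectorBundleV : VectorBundle ℝ F V]

attribute [instance] BundledTopVectorBundle.normedAddCommGroupF
  BundledTopVectorBundle.normedSpaceF BundledTopVectorBundle.finiteDimensionalF
  BundledTopVectorBundle.addCommGroupV BundledTopVectorBundle.moduleV
  BundledTopVectorBundle.topologicalSpaceV BundledTopVectorBundle.topologicalSpaceTotal
  BundledTopVectorBundle.fiberBundleV BundledTopVectorBundle.vectorBundleV

open Set Filter Topology Module


/-! ### Generic injectivity in spaces of linear maps -/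

section Matrices
variable {F : Type*} [NormedAddCommGroup F] [NormedSpace ℝ F] [FiniteDimensional ℝ F]

lemma finrank_clm (F G : Type*) [NormedAddCommGroup F] [NormedSpace ℝ F] [FiniteDimensional ℝ F]
    [NormedAddCommGroup G] [NormedSpace ℝ G] [FiniteDimensional ℝ G] :
    finrank ℝ (F →L[ℝ] G) = finrank ℝ F * finrank ℝ G := by
  rw [← finrank_linearMap ℝ ℝ F G]
  exact (LinearMap.toContinuousLinearMap (𝕜 := ℝ) (E := F) (F' := G)).finrank_eq.symm

/-- A non-injective map has rank at most `dim F - 1`, so it factors through `ℝ ^ (dim F - 1)`.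
(For `dim F = 0` there is no non-injective map, and the truncated subtraction is harmless.) -/
lemma exists_factor_of_not_injective {G : Type*} [NormedAddCommGroup G] [NormedSpace ℝ G]
    (A : F →L[ℝ] G) (hA : ¬ Function.Injective A) :
    ∃ (P : (Fin (finrank ℝ F - 1) → ℝ) →L[ℝ] G) (Q : F →L[ℝ] (Fin (finrank ℝ F - 1) → ℝ)),
      A = P ∘L Q := by
  have hlt : finrank ℝ (LinearMap.range A.toLinearMap) ≤ finrank ℝ F - 1 := by
    have h1 := LinearMap.finrank_range_add_finrank_ker A.toLinearMap
    have h2 : 0 < finrank ℝ (LinearMap.ker A.toLinearMap) := by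
      rw [Nat.pos_iff_ne_zero]
      intro h0
      exact hA (LinearMap.ker_eq_bot.1 (Submodule.finrank_eq_zero.1 h0))
    omega
  obtain ⟨i, hi⟩ := (finrank_le_iff_exists_linearMap (R := ℝ)
    (M := LinearMap.range A.toLinearMap) (M' := Fin (finrank ℝ F - 1) → ℝ)).1 (by simpa using hlt)
  obtain ⟨j, hj⟩ := LinearMap.exists_leftInverse_of_injective i (LinearMap.ker_eq_bot.2 hi)
  refine ⟨LinearMap.toContinuousLinearMap ((LinearMap.range A.toLinearMap).subtype ∘ₗ j),
    LinearMap.toContinuousLinearMap (i ∘ₗ A.toLinearMap.rangeRestrict), ?_⟩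
  ext v
  have := LinearMap.congr_fun hj (A.toLinearMap.rangeRestrict v)
  simp only [LinearMap.comp_apply, LinearMap.id_apply] at this
  simp [this]

/-- Generic translation: for a `C¹` family `p` of linear maps `F → ℝⁿ` depending on `dim E`
parameters, and `n` large, arbitrarily small `M` make all the maps `p x + M` injective. -/
lemma exists_small_add_injective {E : Type*} [NormedAddCommGroup E] [NormedSpace ℝ E]
    [FiniteDimensional ℝ E] {n : ℕ} (hn : finrank ℝ E + finrank ℝ F ^ 2 < n)
    (p : E → F →L[ℝ] (Fin n → ℝ)) (hp : ContDiff ℝ 1 p) {δ : ℝ} (hδ : 0 < δ) :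
    ∃ M : F →L[ℝ] (Fin n → ℝ), ‖M‖ < δ ∧ ∀ x, Function.Injective (p x + M) := by
  rcases Nat.eq_zero_or_pos (finrank ℝ F) with h0 | hpos
  · have : Subsingleton F := finrank_zero_iff.1 h0
    exact ⟨0, by simpa using hδ, fun x => Function.injective_of_subsingleton _⟩
  let k := finrank ℝ F - 1
  -- `M` is bad exactly when `p x + M = P ∘ Q` for some `x` and some `P`, `Q` through `ℝᵏ`
  let Φ : E × (((Fin k → ℝ) →L[ℝ] (Fin n → ℝ)) × (F →L[ℝ] (Fin k → ℝ))) →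
      F →L[ℝ] (Fin n → ℝ) := fun q => (q.2.1 ∘L q.2.2) - p q.1
  have hΦ : ContDiff ℝ 1 Φ :=
    ((contDiff_fst.comp contDiff_snd).clm_comp (contDiff_snd.comp contDiff_snd)).sub
      (hp.comp contDiff_fst)
  have hdim : finrank ℝ (E × (((Fin k → ℝ) →L[ℝ] (Fin n → ℝ)) × (F →L[ℝ] (Fin k → ℝ)))) <
      finrank ℝ (F →L[ℝ] (Fin n → ℝ)) := by
    rw [finrank_prod, finrank_prod, finrank_clm, finrank_clm, finrank_clm]
    simp only [finrank_fin_fun]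
    have hk : finrank ℝ F = k + 1 := by omega
    rw [hk] at hn ⊢
    nlinarith
  obtain ⟨M, hM, hMδ⟩ := (hΦ.dense_compl_range_of_finrank_lt_finrank hdim).exists_dist_lt 0 hδ
  refine ⟨M, by simpa using hMδ, fun x => ?_⟩
  by_contra hx
  obtain ⟨P, Q, hPQ⟩ := exists_factor_of_not_injective _ hx
  refine hM ⟨(x, P, Q), ?_⟩
  simp [Φ, k, ← hPQ]

/-- A continuous map on a compact subset of a chart domain is uniformly approximated by a
`C¹` function of the chart coordinates (Tietze extension followed by smoothing). -/
lemma exists_contDiff_approx_on {X : Type*} [TopologicalSpace X] {E : Type*}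
    [NormedAddCommGroup E] [NormedSpace ℝ E] [FiniteDimensional ℝ E]
    {G : Type*} [NormedAddCommGroup G] [NormedSpace ℝ G] [FiniteDimensional ℝ G]
    (φ : OpenPartialHomeomorph X E) {W : Set X} (hW : IsCompact W) (hWφ : W ⊆ φ.source)
    {h : X → G} (hh : ContinuousOn h W) {δ : ℝ} (hδ : 0 < δ) :
    ∃ p : E → G, ContDiff ℝ 1 p ∧ ∀ x ∈ W, ‖p (φ x) - h x‖ < δ := by
  have hK : IsCompact (φ '' W) := hW.image_of_continuousOn (φ.continuousOn.mono hWφ)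
  have hc : ContinuousOn (h ∘ φ.symm) (φ '' W) := by
    refine hh.comp (φ.continuousOn_symm.mono ?_) ?_
    · rintro _ ⟨x, hx, rfl⟩; exact φ.map_source (hWφ hx)
    · rintro _ ⟨x, hx, rfl⟩; rwa [φ.left_inv (hWφ hx)]
  have : TietzeExtension G := TietzeExtension.of_tvs ℝ
  obtain ⟨g, hg⟩ := ContinuousMap.exists_restrict_eq hK.isClosed ⟨_, hc.domRestrict⟩
  obtain ⟨p, hp, hpg, -⟩ := g.continuous.exists_contDiff_approx 1 (ε := fun _ => δ)
    continuous_const (fun _ => hδ)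
  refine ⟨p, by exact_mod_cast hp, fun x hx => ?_⟩
  have h1 : g (φ x) = h x := by
    have := ContinuousMap.congr_fun hg ⟨φ x, mem_image_of_mem _ hx⟩
    simpa [φ.left_inv (hWφ hx)] using this
  rw [← h1, ← dist_eq_norm]
  exact hpg _

end Matrices

/-! ### Families of linear maps in a local trivialization -/

section Bundle
variable {X : Type*} [TopologicalSpace X]
    {F : Type*} [NormedAddCommGroup F] [NormedSpace ℝ F] [FiniteDimensional ℝ F]
    {V : X → Type*} [∀ x, AddCommGroup (V x)] [∀ x, Module ℝ (V x)]
    [∀ x, TopologicalSpace (V x)] [TopologicalSpace (Bundle.TotalSpace F V)]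
    [FiberBundle F V] [VectorBundle ℝ F V]
    {G : Type*} [NormedAddCommGroup G] [NormedSpace ℝ G]

/-- The linear map `s x : V x → G` read in the local trivialization of `V` at `b`, as a map on the
model fibre.  Meaningful only for `x` in the base set of that trivialization (otherwise it
is `0`). -/
def frame (b : X) (s : ∀ x, V x →ₗ[ℝ] G) (x : X) : F →L[ℝ] G :=
  LinearMap.toContinuousLinearMap (s x ∘ₗ (trivializationAt F V b).symmₗ ℝ x)

lemma frame_apply (b : X) (s : ∀ x, V x →ₗ[ℝ] G) {x : X}
    (hx : x ∈ (trivializationAt F V b).baseSet) (v : V x) :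
    frame (F := F) b s x ((trivializationAt F V b).linearMapAt ℝ x v) = s x v := by
  simp [frame, Trivialization.symmₗ_linearMapAt _ hx]

lemma injective_frame_iff (b : X) (s : ∀ x, V x →ₗ[ℝ] G) {x : X}
    (hx : x ∈ (trivializationAt F V b).baseSet) :
    Function.Injective (frame (F := F) b s x) ↔ Function.Injective (s x) := by
  have h : ⇑(s x) = frame (F := F) b s x ∘
      (trivializationAt F V b).continuousLinearEquivAt ℝ x hx := by
    ext v
    rw [Function.comp_apply, ← frame_apply (F := F) b s hx]
    simp [Trivialization.coe_linearMapAt_of_mem _ hx]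
  rw [h]
  exact (Function.Injective.of_comp_iff' _ (ContinuousLinearEquiv.bijective _)).symm

lemma continuousOn_frame (b : X) (s : ∀ x, V x →ₗ[ℝ] G)
    (hs : Continuous fun p : TotalSpace F V => s p.1 p.2) :
    ContinuousOn (frame (F := F) b s) (trivializationAt F V b).baseSet := by
  rw [continuousOn_clm_apply]
  intro f
  have h1 : ContinuousOn (fun x => (TotalSpace.mk' F x ((trivializationAt F V b).symm x f)))
      (trivializationAt F V b).baseSet := by
    have := (trivializationAt F V b).continuousOn_symm.comp
      (s := (trivializationAt F V b).baseSet) (f := fun x => (x, f)) (by fun_prop)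
      (fun x hx => ⟨hx, mem_univ _⟩)
    exact this
  refine (hs.comp_continuousOn h1).congr fun x hx => ?_
  simp [frame, Trivialization.symmₗ_apply _ hx]

omit [FiniteDimensional ℝ F] in
lemma continuousOn_linearMapAt (b : X) :
    ContinuousOn (fun p : TotalSpace F V => (trivializationAt F V b).linearMapAt ℝ p.1 p.2)
      (π F V ⁻¹' (trivializationAt F V b).baseSet) := by
  have h : ContinuousOn (fun p : TotalSpace F V => ((trivializationAt F V b) p).2)
      (trivializationAt F V b).source :=
    continuous_snd.comp_continuousOn (trivializationAt F V b).continuousOn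
  rw [Trivialization.source_eq] at h
  refine h.congr fun p hp => ?_
  have hp' : p.1 ∈ (trivializationAt F V b).baseSet := hp
  simp [Trivialization.coe_linearMapAt_of_mem _ hp']

end Bundle

/-! ### A continuous fibrewise injective map to a trivial bundle -/

section Step
variable {X : Type*} [TopologicalSpace X]
    {E : Type*} [NormedAddCommGroup E] [NormedSpace ℝ E] [FiniteDimensional ℝ E]
    {F : Type*} [NormedAddCommGroup F] [NormedSpace ℝ F] [FiniteDimensional ℝ F]
    {V : X → Type*} [∀ x, AddCommGroup (V x)] [∀ x, Module ℝ (V x)]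
    [∀ x, TopologicalSpace (V x)] [TopologicalSpace (Bundle.TotalSpace F V)]
    [FiberBundle F V] [VectorBundle ℝ F V]

/-- One step of the construction: `s` is changed only on the support of `ρ`, becomes injective
where `ρ = 1`, and stays injective on `C`. -/
lemma exists_injective_step {n : ℕ} (hn : finrank ℝ E + finrank ℝ F ^ 2 < n)
    (φ : OpenPartialHomeomorph X E) (b : X) (ρ : C(X, ℝ)) (h0 : ∀ x, 0 ≤ ρ x)
    (h1 : ∀ x, ρ x ≤ 1) (hρc : IsCompact (tsupport ρ)) (hρφ : tsupport ρ ⊆ φ.source)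
    (hρb : tsupport ρ ⊆ (trivializationAt F V b).baseSet)
    (s : ∀ x, V x →ₗ[ℝ] (Fin n → ℝ)) (hs : Continuous fun p : TotalSpace F V => s p.1 p.2)
    (C : Set X) (hC : IsClosed C) (hsC : ∀ x ∈ C, Function.Injective (s x)) :
    ∃ s' : ∀ x, V x →ₗ[ℝ] (Fin n → ℝ), (Continuous fun p : TotalSpace F V => s' p.1 p.2) ∧
      (∀ x, s' x ≠ s x → x ∈ Function.support ρ) ∧
      ∀ x, x ∈ C ∨ ρ x = 1 → Function.Injective (s' x) := by
  set t := trivializationAt F V b with ht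
  let h : X → F →L[ℝ] (Fin n → ℝ) := frame b s
  have hh : ContinuousOn h t.baseSet := continuousOn_frame b s hs
  have hhW : ContinuousOn h (tsupport ρ) := hh.mono hρb
  -- injectivity on the compact set `C ∩ tsupport ρ` survives perturbations smaller than `δ`
  obtain ⟨δ, hδ, hδC⟩ : ∃ δ > 0, ∀ x ∈ C ∩ tsupport ρ, ∀ A : F →L[ℝ] (Fin n → ℝ),
      ‖A - h x‖ < δ → Function.Injective A := by
    have hc : IsCompact (h '' (C ∩ tsupport ρ)) :=
      (hρc.inter_left hC).image_of_continuousOn (hhW.mono inter_subset_right)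
    obtain ⟨δ, hδ, hsub⟩ := hc.exists_thickening_subset_open
      (ContinuousLinearMap.isOpen_injective (𝕜 := ℝ) (E := F) (F := Fin n → ℝ)) (by
        rintro _ ⟨x, hx, rfl⟩
        exact (injective_frame_iff b s (hρb hx.2)).2 (hsC x hx.1))
    refine ⟨δ, hδ, fun x hx A hA => hsub ?_⟩
    rw [Metric.mem_thickening_iff]
    exact ⟨h x, mem_image_of_mem _ hx, by rwa [dist_eq_norm]⟩
  obtain ⟨p, hp, hph⟩ := exists_contDiff_approx_on φ hρc hρφ hhW (half_pos hδ)
  obtain ⟨M, hM, hpM⟩ := exists_small_add_injective hn p hp (half_pos hδ)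
  let g : X → F →L[ℝ] (Fin n → ℝ) := fun x => p (φ x) + M - h x
  have hg : ∀ x ∈ tsupport ρ, ‖g x‖ < δ := fun x hx => by
    have : g x = (p (φ x) - h x) + M := by simp only [g]; abel
    rw [this]
    linarith [norm_add_le (p (φ x) - h x) M, hph x hx]
  let s' : ∀ x, V x →ₗ[ℝ] (Fin n → ℝ) := fun x =>
    s x + ρ x • ((g x).toLinearMap ∘ₗ t.linearMapAt ℝ x)
  have hs' : ∀ x ∈ t.baseSet, ∀ v : V x, s' x v = (h x + ρ x • g x) (t.linearMapAt ℝ x v) := by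
    intro x hx v
    simp [s', h, ht, frame_apply b s hx]
  have hoff : ∀ x, ρ x = 0 → s' x = s x := fun x hx => by simp [s', hx]
  have hinj : ∀ x ∈ t.baseSet, Function.Injective (h x + ρ x • g x) →
      Function.Injective (s' x) := by
    intro x hx hi v w hvw
    rw [hs' x hx, hs' x hx] at hvw
    have := hi hvw
    rw [t.coe_linearMapAt_of_mem hx] at this
    exact (t.continuousLinearEquivAt ℝ x hx).injective this
  refine ⟨s', ?_, fun x hx => fun h => hx (hoff x h), ?_⟩
  · rw [continuous_iff_continuousAt]
    intro q
    by_cases hq : q.1 ∈ tsupport ρ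
    · have hO : IsOpen (π F V ⁻¹' (t.baseSet ∩ φ.source)) :=
        (t.open_baseSet.inter φ.open_source).preimage (FiberBundle.continuous_proj F V)
      have hqO : q ∈ π F V ⁻¹' (t.baseSet ∩ φ.source) := ⟨hρb hq, hρφ hq⟩
      refine ContinuousOn.continuousAt (s := π F V ⁻¹' (t.baseSet ∩ φ.source)) ?_
        (hO.mem_nhds hqO)
      have hgc : ContinuousOn g (t.baseSet ∩ φ.source) :=
        ((hp.continuous.comp_continuousOn (φ.continuousOn.mono inter_subset_right)).add
          continuousOn_const).sub (hh.mono inter_subset_left)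
      have hgc' : ContinuousOn (fun q : TotalSpace F V => g q.1)
          (π F V ⁻¹' (t.baseSet ∩ φ.source)) :=
        hgc.comp (FiberBundle.continuous_proj F V).continuousOn fun _ h => h
      have hρ' : Continuous fun q : TotalSpace F V => ρ q.1 :=
        ρ.continuous.comp (FiberBundle.continuous_proj F V)
      have hl := (continuousOn_linearMapAt (F := F) (V := V) b).mono
        (preimage_mono (f := π F V) (inter_subset_left : t.baseSet ∩ φ.source ⊆ t.baseSet))
      exact hs.continuousOn.add (hρ'.continuousOn.smul (hgc'.clm_apply hl))
    · refine hs.continuousAt.congr ?_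
      have : ∀ᶠ q' in 𝓝 q, q'.1 ∈ (tsupport ρ)ᶜ :=
        (FiberBundle.continuous_proj F V).continuousAt
          ((isClosed_tsupport ρ).isOpen_compl.mem_nhds hq)
      filter_upwards [this] with q' hq'
      rw [hoff q'.1 (image_eq_zero_of_notMem_tsupport hq')]
  · intro x hx
    by_cases hxW : x ∈ tsupport ρ
    · refine hinj x (hρb hxW) ?_
      rcases hx with hx | hx
      · refine hδC x ⟨hx, hxW⟩ _ ?_
        rw [add_sub_cancel_left, norm_smul, Real.norm_of_nonneg (h0 x)]
        have := hg x hxW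
        nlinarith [norm_nonneg (g x), h1 x, h0 x]
      · rw [hx, one_smul]
        have : h x + g x = p (φ x) + M := by simp [g]
        rw [this]
        exact hpM _
    · have h00 := image_eq_zero_of_notMem_tsupport hxW
      rcases hx with hx | hx
      · rw [hoff x h00]; exact hsC x hx
      · rw [h00] at hx; norm_num at hx

lemma exists_continuous_injective [T2Space X] [SecondCountableTopology X] [Nonempty X]
    [ChartedSpace E X] {n : ℕ} (hn : finrank ℝ E + finrank ℝ F ^ 2 < n) :
    ∃ s : ∀ x, V x →ₗ[ℝ] (Fin n → ℝ), (Continuous fun p : TotalSpace F V => s p.1 p.2) ∧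
      ∀ x, Function.Injective (s x) := by
  have : LocallyCompactSpace X := ChartedSpace.locallyCompactSpace E X
  have hL : ∀ x : X, ∃ L ∈ 𝓝 x,
      L ⊆ (chartAt E x).source ∩ (trivializationAt F V x).baseSet ∧ IsCompact L := fun x =>
    local_compact_nhds (((chartAt E x).open_source.inter
      (trivializationAt F V x).open_baseSet).mem_nhds
        ⟨mem_chart_source E x, FiberBundle.mem_baseSet_trivializationAt' x⟩)
  choose L hLx hLs hLc using hL
  obtain ⟨S, hSc, hS⟩ := TopologicalSpace.countable_cover_nhds
    (fun x => interior_mem_nhds.2 (hLx x))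
  have hSne : S.Nonempty := by
    by_contra h
    rw [not_nonempty_iff_eq_empty] at h
    simp only [h, mem_empty_iff_false, iUnion_of_empty, iUnion_empty] at hS
    exact (empty_ne_univ hS).elim
  obtain ⟨b, rfl⟩ := hSc.exists_eq_range hSne
  obtain ⟨ρ, hρ⟩ := BumpCovering.exists_isSubordinate (isClosed_univ (X := X))
    (fun i => interior (L (b i))) (fun i => isOpen_interior) (by
      rw [biUnion_range] at hS; exact hS.ge)
  have hρL : ∀ i, tsupport (ρ i) ⊆ L (b i) := fun i => (hρ i).trans interior_subset
  -- the part of `X` on which the first `i` steps have made the map injective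
  let C : ℕ → Set X := fun i => ⋃ j < i, {x | ρ j x = 1}
  have hC : ∀ i, IsClosed (C i) := fun i =>
    (finite_lt_nat i).isClosed_biUnion fun j _ =>
      isClosed_eq (ρ j).continuous continuous_const
  let T := {s : ∀ x, V x →ₗ[ℝ] (Fin n → ℝ) // Continuous fun p : TotalSpace F V => s p.1 p.2}
  have hstep : ∀ i (s : T), (∀ x ∈ C i, Function.Injective (s.1 x)) → ∃ s' : T,
      (∀ x, s'.1 x ≠ s.1 x → x ∈ Function.support (ρ i)) ∧
      ∀ x ∈ C (i + 1), Function.Injective (s'.1 x) := by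
    intro i s hs
    obtain ⟨s', hs'c, hs'o, hs'i⟩ := exists_injective_step hn (chartAt E (b i)) (b i) (ρ i)
      (ρ.nonneg i) (ρ.le_one i)
      ((hLc (b i)).of_isClosed_subset (isClosed_tsupport _) (hρL i))
      (((hρL i).trans (hLs _)).trans inter_subset_left)
      (((hρL i).trans (hLs _)).trans inter_subset_right) s.1 s.2 (C i) (hC i) hs
    refine ⟨⟨s', hs'c⟩, hs'o, fun x hx => hs'i x ?_⟩
    simp only [C, mem_iUnion, mem_ofPred_eq, exists_prop] at hx ⊢
    obtain ⟨j, hj, hjx⟩ := hx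
    rcases Nat.lt_succ_iff_lt_or_eq.1 hj with h | rfl
    · exact Or.inl ⟨j, h, hjx⟩
    · exact Or.inr hjx
  choose! next hnext using hstep
  let f : ℕ → T := fun i => Nat.rec (⟨fun _ => 0, by simpa using continuous_const⟩ : T) next i
  have hf : ∀ i, ∀ x ∈ C i, Function.Injective ((f i).1 x) := by
    intro i
    induction i with
    | zero => intro x hx; simp [C] at hx
    | succ i ih => exact (hnext i (f i) ih).2
  have hlf : LocallyFinite fun i => {x | (f (i + 1)).1 x ≠ (f i).1 x} :=
    ρ.locallyFinite.subset fun i x hx => (hnext i (f i) (hf i)).1 x hx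
  obtain ⟨s, hs⟩ := LocallyFinite.exists_forall_eventually_atTop_eventually_eq'
    (f := fun i => (f i).1) hlf
  refine ⟨s, ?_, fun x => ?_⟩
  · rw [continuous_iff_continuousAt]
    intro q
    obtain ⟨i, hi⟩ := (hs q.1).exists
    refine (f i).2.continuousAt.congr ?_
    filter_upwards [(FiberBundle.continuous_proj F V).continuousAt.eventually hi] with q' hq'
    exact congrArg (fun l => l q'.2) hq'
  · obtain ⟨j, hj⟩ := ρ.eventuallyEq_one' x (mem_univ x)
    obtain ⟨i, hi, hij⟩ := ((hs x).and (eventually_gt_atTop j)).exists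
    rw [← hi.self_of_nhds]
    refine hf i x ?_
    simp only [C, mem_iUnion, mem_ofPred_eq, exists_prop]
    exact ⟨j, hij, hj.self_of_nhds⟩

end Step

/-! ### The quotient bundle and a continuous projection -/

section Complement
variable {X : Type*} [TopologicalSpace X]
    {F : Type*} [NormedAddCommGroup F] [NormedSpace ℝ F] [FiniteDimensional ℝ F]
    {V : X → Type*} [∀ x, AddCommGroup (V x)] [∀ x, Module ℝ (V x)]
    [∀ x, TopologicalSpace (V x)] [TopologicalSpace (Bundle.TotalSpace F V)]
    [FiberBundle F V] [VectorBundle ℝ F V]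
    {G : Type*} [NormedAddCommGroup G] [NormedSpace ℝ G] [FiniteDimensional ℝ G]
    {F' : Type*} [NormedAddCommGroup F'] [NormedSpace ℝ F'] [FiniteDimensional ℝ F']

omit [FiniteDimensional ℝ G] in
lemma isInvertible_of_bijective (A : F →L[ℝ] G) (hA : Function.Bijective A) :
    A.IsInvertible :=
  ⟨(LinearEquiv.ofBijective A.toLinearMap hA).toContinuousLinearEquiv, by ext; rfl⟩

lemma exists_coprod_isInvertible (A : F →L[ℝ] G) (hA : Function.Injective A)
    (hd : finrank ℝ F + finrank ℝ F' = finrank ℝ G) :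
    ∃ J : F' →L[ℝ] G, (A.coprod J).IsInvertible := by
  obtain ⟨K, hK⟩ := Submodule.exists_isCompl (LinearMap.range A.toLinearMap)
  have h1 := Submodule.finrank_add_eq_of_isCompl hK
  have h2 : finrank ℝ (LinearMap.range A.toLinearMap) = finrank ℝ F :=
    LinearMap.finrank_range_of_inj hA
  let e : F' ≃ₗ[ℝ] K := LinearEquiv.ofFinrankEq _ _ (by omega)
  refine ⟨LinearMap.toContinuousLinearMap (K.subtype ∘ₗ e.toLinearMap),
    isInvertible_of_bijective _ ?_⟩
  have hinj : Function.Injective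
      (A.coprod (LinearMap.toContinuousLinearMap (K.subtype ∘ₗ e.toLinearMap))) := by
    rw [injective_iff_map_eq_zero]
    rintro ⟨f, w⟩ hfw
    have h0 : A f + (e w : G) = 0 := by simpa using hfw
    have hw : (e w : G) ∈ LinearMap.range A.toLinearMap :=
      ⟨-f, by simp [eq_neg_of_add_eq_zero_right h0]⟩
    have hw0 : (e w : G) = 0 := Submodule.disjoint_def.1 hK.disjoint _ hw (e w).2
    have hw' : w = 0 := by simpa using hw0
    have hf : A f = A 0 := by rw [hw0] at h0; simpa using h0
    rw [hw', hA hf]; rfl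
  exact ⟨hinj, (LinearMap.injective_iff_surjective_of_finrank_eq_finrank
    (f := (A.coprod (LinearMap.toContinuousLinearMap (K.subtype ∘ₗ e.toLinearMap))).toLinearMap)
    (by rw [finrank_prod, hd])).1 hinj⟩

/-- The map `(f, w) ↦ s x f + J i w` from `F × F'` to `G`, where `V x` is identified with `F` by
the local trivialization at `i`. -/
def splitMap (s : ∀ x, V x →ₗ[ℝ] G) (J : X → F' →L[ℝ] G) (i x : X) : F × F' →L[ℝ] G :=
  (frame i s x).coprod (J i)

/-- The points `x` of the base set of the trivialization at `i` at which `J i` is still a complement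
of the range of `s x`, i.e. `splitMap s J i x` is invertible. -/
def splitSet (F : Type*) [NormedAddCommGroup F] [NormedSpace ℝ F] [FiniteDimensional ℝ F]
    {V : X → Type*} [∀ x, AddCommGroup (V x)] [∀ x, Module ℝ (V x)]
    [∀ x, TopologicalSpace (V x)] [TopologicalSpace (Bundle.TotalSpace F V)]
    [FiberBundle F V] [VectorBundle ℝ F V]
    (s : ∀ x, V x →ₗ[ℝ] G) (J : X → F' →L[ℝ] G) (i : X) : Set X :=
  (trivializationAt F V i).baseSet ∩
    {x | (splitMap (F := F) s J i x).IsInvertible}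

/-- The `F`-component of the inverse of `splitMap s J i x`. -/
def coordE (F : Type*) [NormedAddCommGroup F] [NormedSpace ℝ F] [FiniteDimensional ℝ F]
    {V : X → Type*} [∀ x, AddCommGroup (V x)] [∀ x, Module ℝ (V x)]
    [∀ x, TopologicalSpace (V x)] [TopologicalSpace (Bundle.TotalSpace F V)]
    [FiberBundle F V] [VectorBundle ℝ F V]
    (s : ∀ x, V x →ₗ[ℝ] G) (J : X → F' →L[ℝ] G) (i x : X) : G →L[ℝ] F :=
  ContinuousLinearMap.fst ℝ F F' ∘L (splitMap (F := F) s J i x).inverse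

/-- The `F'`-component of the inverse of `splitMap s J i x`.  For `x ∈ splitSet F s J i` its kernel is
the range of `s x`, so that it identifies the quotient `G / range (s x)` with `F'`. -/
def coordQ (F : Type*) [NormedAddCommGroup F] [NormedSpace ℝ F] [FiniteDimensional ℝ F]
    {V : X → Type*} [∀ x, AddCommGroup (V x)] [∀ x, Module ℝ (V x)]
    [∀ x, TopologicalSpace (V x)] [TopologicalSpace (Bundle.TotalSpace F V)]
    [FiberBundle F V] [VectorBundle ℝ F V]
    (s : ∀ x, V x →ₗ[ℝ] G) (J : X → F' →L[ℝ] G) (i x : X) : G →L[ℝ] F' :=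
  ContinuousLinearMap.snd ℝ F F' ∘L (splitMap (F := F) s J i x).inverse

variable {s : ∀ x, V x →ₗ[ℝ] G} {J : X → F' →L[ℝ] G} {i x : X}

omit [FiniteDimensional ℝ G] [FiniteDimensional ℝ F'] in
lemma inverse_splitMap_apply (hx : x ∈ splitSet F s J i) (v : V x) (w : F') :
    (splitMap (F := F) s J i x).inverse (s x v + J i w) =
      ((trivializationAt F V i).linearMapAt ℝ x v, w) := by
  have h : splitMap (F := F) s J i x ((trivializationAt F V i).linearMapAt ℝ x v, w) =
      s x v + J i w := by
    simp [splitMap, frame_apply i s hx.1]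
  rw [← h, ContinuousLinearMap.IsInvertible.inverse_apply_self hx.2]

omit [FiniteDimensional ℝ G] [FiniteDimensional ℝ F'] in
lemma coordE_apply (hx : x ∈ splitSet F s J i) (v : V x) :
    coordE F s J i x (s x v) = (trivializationAt F V i).linearMapAt ℝ x v := by
  have := inverse_splitMap_apply hx v 0
  rw [map_zero, add_zero] at this
  simp [coordE, this]

omit [FiniteDimensional ℝ G] [FiniteDimensional ℝ F'] in
lemma coordQ_apply (hx : x ∈ splitSet F s J i) (v : V x) :
    coordQ F s J i x (s x v) = 0 := by
  have := inverse_splitMap_apply hx v 0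
  rw [map_zero, add_zero] at this
  simp [coordQ, this]

omit [FiniteDimensional ℝ G] [FiniteDimensional ℝ F'] in
lemma coordQ_J (hx : x ∈ splitSet F s J i) (w : F') :
    coordQ F s J i x (J i w) = w := by
  have := inverse_splitMap_apply hx 0 w
  rw [map_zero, zero_add] at this
  simp [coordQ, this]

omit [FiniteDimensional ℝ G] [FiniteDimensional ℝ F'] in
lemma frame_add_J (hx : x ∈ splitSet F s J i) (q : G) :
    frame i s x (coordE F s J i x q) + J i (coordQ F s J i x q) = q :=
  ContinuousLinearMap.IsInvertible.self_apply_inverse hx.2 q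

omit [FiniteDimensional ℝ G] [FiniteDimensional ℝ F'] in
lemma exists_add_J (hx : x ∈ splitSet F s J i) (q : G) :
    ∃ v : V x, q = s x v + J i (coordQ F s J i x q) :=
  ⟨(trivializationAt F V i).symmₗ ℝ x (coordE F s J i x q), (frame_add_J hx q).symm⟩

omit [FiniteDimensional ℝ G] in
lemma continuousOn_splitMap (hs : Continuous fun p : TotalSpace F V => s p.1 p.2) :
    ContinuousOn (splitMap (F := F) s J i) (trivializationAt F V i).baseSet := by
  rw [continuousOn_clm_apply]
  rintro ⟨f, w⟩
  have := (continuousOn_frame i s hs).clm_apply (continuousOn_const (c := f))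
  exact (this.add (continuousOn_const (c := J i w))).congr fun x _ => by simp [splitMap]

omit [FiniteDimensional ℝ G] in
lemma isOpen_splitSet (hs : Continuous fun p : TotalSpace F V => s p.1 p.2) :
    IsOpen (splitSet F s J i) := by
  have : CompleteSpace F := FiniteDimensional.complete ℝ F
  have : CompleteSpace F' := FiniteDimensional.complete ℝ F'
  exact (continuousOn_splitMap hs).isOpen_inter_preimage (trivializationAt F V i).open_baseSet
    (ContinuousLinearEquiv.isOpen (𝕜 := ℝ) (E := F × F') (F := G))

omit [FiniteDimensional ℝ G] in
lemma continuousOn_inverse_splitMap (hs : Continuous fun p : TotalSpace F V => s p.1 p.2) :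
    ContinuousOn (fun x => (splitMap (F := F) s J i x).inverse) (splitSet F s J i) := by
  have : CompleteSpace F := FiniteDimensional.complete ℝ F
  have : CompleteSpace F' := FiniteDimensional.complete ℝ F'
  intro x hx
  have h1 : ContinuousAt (ContinuousLinearMap.inverse (R := ℝ) (M := F × F') (M₂ := G))
      (splitMap (F := F) s J i x) :=
    (ContinuousLinearMap.IsInvertible.contDiffAt_map_inverse (n := 0) hx.2).continuousAt
  exact h1.comp_continuousWithinAt ((continuousOn_splitMap hs x hx.1).mono inter_subset_left)

omit [FiniteDimensional ℝ G] in
lemma continuousOn_coordQ (hs : Continuous fun p : TotalSpace F V => s p.1 p.2) :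
    ContinuousOn (coordQ F s J i) (splitSet F s J i) :=
  continuousOn_const.clm_comp (continuousOn_inverse_splitMap hs)

omit [FiniteDimensional ℝ G] in
lemma continuousOn_coordE (hs : Continuous fun p : TotalSpace F V => s p.1 p.2) :
    ContinuousOn (coordE F s J i) (splitSet F s J i) :=
  continuousOn_const.clm_comp (continuousOn_inverse_splitMap hs)

variable (s J) in
/-- The quotient bundle of `X × G` by the image of `s`, given by cocycles: charts are indexed by the
points `i` of `X`, and `w` in the chart at `i` stands for the class of `J i w`. -/
def quotientCore (hs : Continuous fun p : TotalSpace F V => s p.1 p.2)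
    (hJ : ∀ x, x ∈ splitSet F s J x) : VectorBundleCore ℝ X F' X where
  baseSet := splitSet F s J
  isOpen_baseSet _ := isOpen_splitSet hs
  indexAt x := x
  mem_baseSet_at := hJ
  coordChange i j x := coordQ F s J j x ∘L J i
  coordChange_self i x hx v := coordQ_J hx v
  continuousOn_coordChange i j :=
    ((continuousOn_coordQ hs).mono inter_subset_right).clm_comp continuousOn_const
  coordChange_comp i j k x hx w := by
    obtain ⟨v, hv⟩ := exists_add_J hx.1.2 (J i w)
    have h := congrArg (coordQ F s J k x) hv
    rw [map_add, coordQ_apply hx.2, zero_add] at h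
    exact h.symm

omit [FiniteDimensional ℝ G] in
/-- A continuous family `Q` of projections of `G` onto the ranges of `s x`, glued from local ones by a
partition of unity: such projections form a convex set. -/
lemma exists_projection [NormalSpace X] [ParacompactSpace X]
    (hs : Continuous fun p : TotalSpace F V => s p.1 p.2)
    (hJ : ∀ x, x ∈ splitSet F s J x) :
    ∃ Q : C(X, G →L[ℝ] G), ∀ x, (∀ q, Q x q ∈ LinearMap.range (s x)) ∧
      ∀ v, Q x (s x v) = s x v := by
  refine exists_continuous_forall_mem_convex_of_local
    (t := fun x => {A : G →L[ℝ] G | (∀ q, A q ∈ LinearMap.range (s x)) ∧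
      ∀ v, A (s x v) = s x v}) ?_ ?_
  · intro x A hA B hB a b _ _ hab
    refine ⟨fun q => ?_, fun v => ?_⟩
    · exact add_mem (Submodule.smul_mem _ _ (hA.1 q)) (Submodule.smul_mem _ _ (hB.1 q))
    · change a • A (s x v) + b • B (s x v) = s x v
      rw [hA.2, hB.2, ← add_smul, hab, one_smul]
  · intro x
    refine ⟨splitSet F s J x, (isOpen_splitSet hs).mem_nhds (hJ x),
      fun y => frame x s y ∘L coordE F s J x y, ?_, fun y hy => ⟨fun q => ?_, fun v => ?_⟩⟩
    · exact ((continuousOn_frame x s hs).mono inter_subset_left).clm_comp (continuousOn_coordE hs)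
    · exact ⟨_, rfl⟩
    · simp [coordE_apply hy, frame_apply x s hy.1]

end Complement

/-! ### The splitting -/

section Main
variable {X : Type*} [TopologicalSpace X]
    {F : Type*} [NormedAddCommGroup F] [NormedSpace ℝ F] [FiniteDimensional ℝ F]
    {V : X → Type*} [∀ x, AddCommGroup (V x)] [∀ x, Module ℝ (V x)]
    [∀ x, TopologicalSpace (V x)] [TopologicalSpace (Bundle.TotalSpace F V)]
    [FiberBundle F V] [VectorBundle ℝ F V]
    {G : Type*} [NormedAddCommGroup G] [NormedSpace ℝ G] [FiniteDimensional ℝ G]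
    {F' : Type*} [NormedAddCommGroup F'] [NormedSpace ℝ F'] [FiniteDimensional ℝ F']
    {J : X → F' →L[ℝ] G} {s : ∀ x, V x →ₗ[ℝ] G}

/-- The map `(v, w) ↦ s x v + (1 - Q x) (J x w)`, where `w` stands for the class of `J x w` in the
quotient by the range of `s x`. -/
def sumMap (s : ∀ x, V x →ₗ[ℝ] G) (J : X → F' →L[ℝ] G) (Q : C(X, G →L[ℝ] G)) (x : X) :
    (V x × F') →ₗ[ℝ] G :=
  (s x).coprod ((LinearMap.id - (Q x).toLinearMap) ∘ₗ (J x).toLinearMap)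

omit [FiniteDimensional ℝ G] [FiniteDimensional ℝ F'] [∀ x, TopologicalSpace (V x)] in
lemma sumMap_apply (Q : C(X, G →L[ℝ] G)) (x : X) (v : V x) (w : F') :
    sumMap s J Q x (v, w) = s x v + (J x w - Q x (J x w)) := by
  simp [sumMap]

section
variable {Q : C(X, G →L[ℝ] G)}
  (hQ : ∀ x, (∀ q, Q x q ∈ LinearMap.range (s x)) ∧ ∀ v, Q x (s x v) = s x v)
include hQ

omit [FiniteDimensional ℝ G] [FiniteDimensional ℝ F'] [∀ x, TopologicalSpace (V x)] in
lemma projection_sumMap (x : X) (v : V x) (w : F') :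
    Q x (sumMap s J Q x (v, w)) = s x v := by
  obtain ⟨u, hu⟩ := (hQ x).1 (J x w)
  rw [sumMap_apply, map_add, map_sub, ← hu, (hQ x).2, (hQ x).2, sub_self, add_zero]

omit [FiniteDimensional ℝ G] [FiniteDimensional ℝ F'] in
lemma coordQ_sumMap {i x : X} (hx : x ∈ splitSet F s J i) (v : V x) (w : F') :
    coordQ F s J i x (sumMap s J Q x (v, w)) = coordQ F s J i x (J x w) := by
  obtain ⟨u, hu⟩ := (hQ x).1 (J x w)
  rw [sumMap_apply, map_add, map_sub, ← hu, coordQ_apply hx, coordQ_apply hx, zero_add, sub_zero]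

omit [FiniteDimensional ℝ F'] [FiniteDimensional ℝ G] in
/-- `sumMap` in terms of the coordinate of `w` in the chart at `i` of the quotient bundle: changing
the representative of the class changes nothing since `1 - Q x` kills the range of `s x`. -/
lemma sumMap_eq {i x : X} (hx : x ∈ splitSet F s J i) (v : V x) (w : F') :
    sumMap s J Q x (v, w) = s x v + (J i (coordQ F s J i x (J x w)) -
      Q x (J i (coordQ F s J i x (J x w)))) := by
  obtain ⟨u, hu⟩ := exists_add_J hx (J x w)
  rw [sumMap_apply]
  generalize coordQ F s J i x (J x w) = w' at hu ⊢
  rw [hu, map_add, (hQ x).2]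
  abel

omit [FiniteDimensional ℝ G] [FiniteDimensional ℝ F'] in
lemma bijective_sumMap (hJ : ∀ x, x ∈ splitSet F s J x) (hi : ∀ x, Function.Injective (s x))
    (x : X) : Function.Bijective (sumMap s J Q x) := by
  constructor
  · rw [injective_iff_map_eq_zero]
    rintro ⟨v, w⟩ h
    have h1 := projection_sumMap (J := J) hQ x v w
    have h2 := coordQ_sumMap hQ (hJ x) v w
    rw [h, map_zero] at h1 h2
    rw [coordQ_J (hJ x)] at h2
    have hv : v = 0 := hi x (by rw [← h1, map_zero])
    rw [hv, ← h2]; rfl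
  · intro q
    obtain ⟨v, hv⟩ := exists_add_J (hJ x) q
    obtain ⟨u, hu⟩ := (hQ x).1 (J x (coordQ F s J x x q))
    refine ⟨(v + u, coordQ F s J x x q), ?_⟩
    rw [sumMap_apply, map_add, hu]
    conv_rhs => rw [hv]
    abel

end

end Main

/-- **Whitney-sum complement** (topological case): every topological finite-rank real vector
bundle over a finite-dimensional topological manifold (Hausdorff, second-countable, connected,
not necessarily compact) has a complement `E'` such that `E ⊕ E'` is trivial as a topological
vector bundle. -/
theorem exists_complement_whitney_sum_trivial_topological
    (d : ℕ) (X : Type*) [TopologicalSpace X]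
    [ChartedSpace (EuclideanSpace ℝ (Fin d)) X]
    [T2Space X] [SecondCountableTopology X] [ConnectedSpace X]
    (F : Type) [NormedAddCommGroup F] [NormedSpace ℝ F] [FiniteDimensional ℝ F]
    (V : X → Type) [∀ x, AddCommGroup (V x)] [∀ x, Module ℝ (V x)]
    [∀ x, TopologicalSpace (V x)] [TopologicalSpace (Bundle.TotalSpace F V)]
    [FiberBundle F V] [VectorBundle ℝ F V] :
    ∃ (B' : BundledTopVectorBundle X) (n : ℕ)
      (e : ∀ x : X, (V x × B'.V x) ≃ₗ[ℝ] (Fin n → ℝ)),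
      Continuous
        (fun p : Bundle.TotalSpace (F × B'.F) (V ×ᵇ B'.V) => (p.proj, e p.proj p.snd)) ∧
      Continuous
        (fun q : X × (Fin n → ℝ) =>
          (Bundle.TotalSpace.mk' (F × B'.F) q.1 ((e q.1).symm q.2) :
            Bundle.TotalSpace (F × B'.F) (V ×ᵇ B'.V))) := by
  have : LocallyCompactSpace X := ChartedSpace.locallyCompactSpace (EuclideanSpace ℝ (Fin d)) X
  obtain ⟨n, hn⟩ : ∃ n, n = d + finrank ℝ F ^ 2 + 1 := ⟨_, rfl⟩
  have hkn : finrank ℝ F ≤ n := by nlinarith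
  obtain ⟨s, hs, hi⟩ := exists_continuous_injective (E := EuclideanSpace ℝ (Fin d)) (F := F)
    (V := V) (n := n) (by rw [finrank_euclideanSpace_fin]; omega)
  have hJ' : ∀ x : X, ∃ J : (Fin (n - finrank ℝ F) → ℝ) →L[ℝ] (Fin n → ℝ),
      ((frame (F := F) x s x).coprod J).IsInvertible := fun x =>
    exists_coprod_isInvertible _ ((injective_frame_iff x s
      (FiberBundle.mem_baseSet_trivializationAt' x)).2 (hi x)) (by simp; omega)
  choose J hJ' using hJ'
  have hJ : ∀ x, x ∈ splitSet F s J x := fun x =>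
    ⟨FiberBundle.mem_baseSet_trivializationAt' x, hJ' x⟩
  obtain ⟨Q, hQ⟩ := exists_projection hs hJ
  let Z := quotientCore s J hs hJ
  let e : ∀ x : X, (V x × Z.Fiber x) ≃ₗ[ℝ] (Fin n → ℝ) := fun x =>
    LinearEquiv.ofBijective (sumMap s J Q x) (bijective_sumMap hQ hJ hi x)
  have hind := FiberBundle.Prod.isInducing_diag F V (Fin (n - finrank ℝ F) → ℝ) Z.Fiber
  refine ⟨{ F := Fin (n - finrank ℝ F) → ℝ, V := Z.Fiber }, n, e, ?_, ?_⟩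
  · have h1 : Continuous fun p : TotalSpace (F × (Fin (n - finrank ℝ F) → ℝ)) (V ×ᵇ Z.Fiber) =>
        (⟨p.1, p.2.1⟩ : TotalSpace F V) := continuous_fst.comp hind.continuous
    have h2 : Continuous fun p : TotalSpace (F × (Fin (n - finrank ℝ F) → ℝ)) (V ×ᵇ Z.Fiber) =>
        (⟨p.1, p.2.2⟩ : TotalSpace (Fin (n - finrank ℝ F) → ℝ) Z.Fiber) :=
      continuous_snd.comp hind.continuous
    have h0 : Continuous fun p : TotalSpace (F × (Fin (n - finrank ℝ F) → ℝ)) (V ×ᵇ Z.Fiber) =>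
        p.1 := (FiberBundle.continuous_proj F V).comp h1
    refine h0.prodMk (continuous_iff_continuousAt.2 fun p => ?_)
    -- this is the coordinate of the second component in the local trivialization at `p.1`
    have h3 : ContinuousAt
        (fun r : TotalSpace (F × (Fin (n - finrank ℝ F) → ℝ)) (V ×ᵇ Z.Fiber) =>
          coordQ F s J p.1 r.1 (J r.1 r.2.2)) p :=
      ((FiberBundle.continuousAt_totalSpace _ _).1 h2.continuousAt).2
    have h4 : ContinuousAt
        (fun r : TotalSpace (F × (Fin (n - finrank ℝ F) → ℝ)) (V ×ᵇ Z.Fiber) =>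
          J p.1 (coordQ F s J p.1 r.1 (J r.1 r.2.2))) p :=
      (J p.1).continuous.continuousAt.comp h3
    have h5 : ContinuousAt
        (fun r : TotalSpace (F × (Fin (n - finrank ℝ F) → ℝ)) (V ×ᵇ Z.Fiber) => Q r.1) p :=
      (Q.continuous.comp h0).continuousAt
    refine ((hs.comp h1).continuousAt.add (h4.sub (h5.clm_apply h4))).congr ?_
    filter_upwards [h0.continuousAt ((isOpen_splitSet hs).mem_nhds (hJ p.1))] with r hr
    exact (sumMap_eq hQ hr r.2.1 r.2.2).symm
  · rw [hind.continuous_iff]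
    have hpt : ∀ q : X × (Fin n → ℝ), sumMap s J Q q.1 ((e q.1).symm q.2) = q.2 := fun q =>
      (e q.1).apply_symm_apply q.2
    refine Continuous.prodMk ?_ ?_
    · refine continuous_iff_continuousAt.2 fun q₀ =>
        (FiberBundle.continuousAt_totalSpace _ _).2 ⟨continuous_fst.continuousAt, ?_⟩
      have hx : q₀.1 ∈ splitSet F s J q₀.1 := hJ q₀.1
      have h1 : ContinuousAt (fun q : X × (Fin n → ℝ) => coordE F s J q₀.1 q.1) q₀ :=
        ((continuousOn_coordE hs).continuousAt ((isOpen_splitSet hs).mem_nhds hx)).comp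
          continuous_fst.continuousAt
      have h2 : ContinuousAt (fun q : X × (Fin n → ℝ) => Q q.1 q.2) q₀ :=
        ((Q.continuous.comp continuous_fst).clm_apply continuous_snd).continuousAt
      -- the `V`-component `v` of the preimage satisfies `s v = Q q`
      refine (h1.clm_apply h2).congr ?_
      filter_upwards [continuous_fst.continuousAt ((isOpen_splitSet hs).mem_nhds hx)] with q hq
      have h3 := projection_sumMap (J := J) hQ q.1 ((e q.1).symm q.2).1 ((e q.1).symm q.2).2
      replace h3 := (congrArg (Q q.1) (hpt q)).symm.trans h3
      rw [h3, coordE_apply hq, Trivialization.coe_linearMapAt_of_mem _ hq.1]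
    · refine continuous_iff_continuousAt.2 fun q₀ =>
        (FiberBundle.continuousAt_totalSpace _ _).2 ⟨continuous_fst.continuousAt, ?_⟩
      have hx : q₀.1 ∈ splitSet F s J q₀.1 := hJ q₀.1
      have h1 : ContinuousAt (fun q : X × (Fin n → ℝ) => coordQ F s J q₀.1 q.1) q₀ :=
        ((continuousOn_coordQ hs).continuousAt ((isOpen_splitSet hs).mem_nhds hx)).comp
          continuous_fst.continuousAt
      -- the class of `q` modulo the range of `s` is the quotient component of the preimage
      refine (h1.clm_apply continuous_snd.continuousAt).congr ?_
      filter_upwards [continuous_fst.continuousAt ((isOpen_splitSet hs).mem_nhds hx)] with q hq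
      have h3 := coordQ_sumMap hQ hq ((e q.1).symm q.2).1 ((e q.1).symm q.2).2
      replace h3 := (congrArg (coordQ F s J q₀.1 q.1) (hpt q)).symm.trans h3
      exact h3

end
end

section
/- Let X be a compact Hausdorff topological space and let E → X be a topological real vector bundle of finite rank. Then the C(X)-module Γ(E) of global continuous sections of E is a finitely generated projective module over the ring C(X) of continuous real-valued functions on X. -/
/-!
The module `Γ(E)` is a retract of a finite free module because it has a finite dual basis. By
compactness finitely many trivializing open sets cover `X`; the square roots `σ i` of a subordinate
partition of unity satisfy `∑ i, σ i ^ 2 = 1` (`exists_sq_partition`). For a basis `b` of the model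
fiber, `σ i` times the `j`-th frame vector of the `i`-th trivialization is a global section
(`cutoffSection`), and `σ i` times the `j`-th coordinate in that trivialization is a `C(X)`-linear
functional on sections (`cutoffCoord`). Summing functional times section over `j` gives
`σ i ^ 2 • s`, and summing over `i` gives back `s`. Hence the identity of `Γ(E)` factors through
a finite free module, which yields both finite generation and projectivity.
-/

/-!
Serre–Swan theorem, continuous case (Swan): for a topological real vector bundle `E → X` of
finite rank over a compact Hausdorff space `X`, the `C(X)`-module `Γ(E)` of global continuous
sections is a finitely generated projective module over the ring `C(X)` of continuous
real-valued functions.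
-/

open Bundle Filter Function Set

noncomputable section

variable {X : Type*} [TopologicalSpace X]
  {F : Type*} [NormedAddCommGroup F] [NormedSpace ℝ F]
  {V : X → Type*} [∀ x, AddCommGroup (V x)] [∀ x, Module ℝ (V x)]
  [∀ x, TopologicalSpace (V x)] [TopologicalSpace (Bundle.TotalSpace F V)]
  [FiberBundle F V] [VectorBundle ℝ F V]

/-- The pointwise `C(X, ℝ)`-module structure on dependent functions `∀ x, V x`. -/
instance Pi.instModuleContinuousMap : Module C(X, ℝ) (∀ x, V x) :=
  Module.compHom _ (ContinuousMap.coeFnRingHom : C(X, ℝ) →+* (X → ℝ))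

variable (F V) in
/-- The `C(X, ℝ)`-module of global continuous sections of the vector bundle `V` over `X`,
with pointwise operations. -/
def continuousSections : Submodule C(X, ℝ) (∀ x, V x) where
  carrier := {s | Continuous fun x => Bundle.TotalSpace.mk' F x (s x)}
  zero_mem' := by
    rw [mem_setOf_eq, continuous_iff_continuousAt]
    intro x₀
    rw [FiberBundle.continuousAt_totalSpace]
    refine ⟨continuousAt_id, ?_⟩
    set e := trivializationAt F V x₀
    refine ContinuousAt.congr_of_eventuallyEq (continuousAt_const (y := (0 : F))) ?_
    filter_upwards [e.open_baseSet.mem_nhds (mem_baseSet_trivializationAt F V x₀)] with x hx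
    exact (e.linear ℝ hx).map_zero
  add_mem' := by
    intro s t hs ht
    rw [mem_setOf_eq, continuous_iff_continuousAt]
    intro x₀
    have hs' := hs.continuousAt (x := x₀)
    have ht' := ht.continuousAt (x := x₀)
    rw [FiberBundle.continuousAt_totalSpace] at hs' ht' ⊢
    refine ⟨continuousAt_id, ?_⟩
    set e := trivializationAt F V x₀
    refine (hs'.2.add ht'.2).congr_of_eventuallyEq ?_
    filter_upwards [e.open_baseSet.mem_nhds (mem_baseSet_trivializationAt F V x₀)] with x hx
    exact (e.linear ℝ hx).1 _ _
  smul_mem' := by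
    intro c s hs
    rw [mem_setOf_eq, continuous_iff_continuousAt]
    intro x₀
    have hs' := hs.continuousAt (x := x₀)
    rw [FiberBundle.continuousAt_totalSpace] at hs' ⊢
    refine ⟨continuousAt_id, ?_⟩
    set e := trivializationAt F V x₀
    refine ((c.continuous.continuousAt (x := x₀)).smul hs'.2).congr_of_eventuallyEq ?_
    filter_upwards [e.open_baseSet.mem_nhds (mem_baseSet_trivializationAt F V x₀)] with x hx
    exact (e.linear ℝ hx).2 _ _

/-- Continuity of a section at a point can be tested in any trivialization around that point. -/
lemma continuousAt_section_of_trivialization (e : Trivialization F (π F V)) {s : ∀ x, V x} {x₀ : X}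
    (hx₀ : x₀ ∈ e.baseSet) :
    ContinuousAt (fun x => TotalSpace.mk' F x (s x)) x₀ ↔
      ContinuousAt (fun x => (e ⟨x, s x⟩).2) x₀ := by
  have hsrc : TotalSpace.mk' F x₀ (s x₀) ∈ e.source := e.mem_source.2 hx₀
  refine (e.tendsto_nhds_iff hsrc).trans ?_
  exact and_iff_right tendsto_id

/-- A cutoff of a constant local section, extended by zero outside the trivializing set. -/
def cutoffSection (e : Trivialization F (π F V)) [e.IsLinear ℝ] (ρ : C(X, ℝ))
    (hρ : tsupport ρ ⊆ e.baseSet) (v : F) : continuousSections F V :=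
  ⟨fun x => ρ x • e.symmₗ ℝ x v, by
    change Continuous _
    rw [continuous_iff_continuousAt]
    intro x₀
    by_cases hx₀ : x₀ ∈ tsupport ρ
    · rw [continuousAt_section_of_trivialization e (hρ hx₀)]
      refine ((ρ.continuous.smul continuous_const).continuousAt
        (f := fun x => ρ x • v)).congr_of_eventuallyEq ?_
      filter_upwards [e.open_baseSet.mem_nhds (hρ hx₀)] with x hx
      rw [← congrFun (e.coe_linearMapAt_of_mem (R := ℝ) hx) (ρ x • e.symmₗ ℝ x v), map_smul,
        e.linearMapAt_symmₗ hx]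
    · refine ((Trivialization.continuous_zeroSection ℝ).continuousAt (x := x₀)).congr_of_eventuallyEq ?_
      filter_upwards [notMem_tsupport_iff_eventuallyEq.1 hx₀] with x hx
      simp [zeroSection, hx]⟩

/-- The linear functional on sections which reads off a cutoff of the coordinate `ℓ` of a section
in a local trivialization. -/
def cutoffCoord (e : Trivialization F (π F V)) [e.IsLinear ℝ] (ρ : C(X, ℝ))
    (hρ : tsupport ρ ⊆ e.baseSet) (ℓ : F →L[ℝ] ℝ) : continuousSections F V →ₗ[C(X, ℝ)] C(X, ℝ) where
  toFun s := ⟨fun x => ρ x * ℓ (e.linearMapAt ℝ x (s.1 x)), by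
    refine continuous_of_tsupport fun x₀ hx₀ => ?_
    have hx₀ := hρ (tsupport_mul_subset_left hx₀)
    refine ρ.continuous.continuousAt.mul (ℓ.continuous.continuousAt.comp ?_)
    have hs : Continuous fun x => TotalSpace.mk' F x (s.1 x) := s.2
    refine ((continuousAt_section_of_trivialization e hx₀).1
      hs.continuousAt).congr_of_eventuallyEq ?_
    filter_upwards [e.open_baseSet.mem_nhds hx₀] with x hx
    exact congrFun (e.coe_linearMapAt_of_mem (R := ℝ) hx) _⟩
  map_add' s t := by
    ext x
    simp [mul_add]
  map_smul' c s := by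
    ext x
    change ρ x * ℓ (e.linearMapAt ℝ x (c x • s.1 x)) = c x * (ρ x * ℓ (e.linearMapAt ℝ x (s.1 x)))
    simp only [map_smul, smul_eq_mul]
    ring

variable (F V) in
/-- There are finitely many continuous cutoffs `σ i`, supported in trivializing sets, with
`∑ i, σ i ^ 2 = 1`: the square roots of a partition of unity. -/
lemma exists_sq_partition [CompactSpace X] [T2Space X] :
    ∃ (n : ℕ) (p : Fin n → X) (σ : Fin n → C(X, ℝ)),
      (∀ i, tsupport (σ i) ⊆ (trivializationAt F V (p i)).baseSet) ∧
      ∀ x, ∑ i, σ i x * σ i x = 1 := by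
  obtain ⟨t, ht⟩ := isCompact_univ.elim_finite_subcover
    (fun x => (trivializationAt F V x).baseSet) (fun x => (trivializationAt F V x).open_baseSet)
    (fun x _ => mem_iUnion.2 ⟨x, mem_baseSet_trivializationAt F V x⟩)
  let p : Fin t.card → X := fun i => t.equivFin.symm i
  obtain ⟨ρ, hsupp, hsum, hρ, -⟩ := exists_continuous_sum_one_of_isOpen_isCompact
    (s := fun i => (trivializationAt F V (p i)).baseSet)
    (fun i => (trivializationAt F V (p i)).open_baseSet) isCompact_univ (by
      intro x hx
      obtain ⟨y, hy, hxy⟩ := mem_iUnion₂.1 (ht hx)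
      exact mem_iUnion.2 ⟨t.equivFin ⟨y, hy⟩, by simpa [p] using hxy⟩)
  refine ⟨t.card, p, fun i => ⟨fun x => √(ρ i x), (ρ i).continuous.sqrt⟩, fun i => ?_, fun x => ?_⟩
  · refine (closure_mono fun x hx => ?_).trans (hsupp i)
    intro h
    exact hx (by simp [h])
  · have := hsum (mem_univ x)
    simp only [Finset.sum_apply, Pi.one_apply] at this
    simpa [Real.mul_self_sqrt (hρ _ x).1] using this

/-- **Serre–Swan (Swan's theorem)**: the module of global continuous sections of a topological
finite-rank real vector bundle over a compact Hausdorff space is a finitely generated projective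
module over the ring of continuous real-valued functions. -/
theorem Swan_continuousSections_finite_projective
    (X : Type*) [TopologicalSpace X] [CompactSpace X] [T2Space X]
    (F : Type*) [NormedAddCommGroup F] [NormedSpace ℝ F] [FiniteDimensional ℝ F]
    (V : X → Type*) [∀ x, AddCommGroup (V x)] [∀ x, Module ℝ (V x)]
    [∀ x, TopologicalSpace (V x)] [TopologicalSpace (Bundle.TotalSpace F V)]
    [FiberBundle F V] [VectorBundle ℝ F V] :
    Module.Finite C(X, ℝ) (continuousSections F V) ∧
      Module.Projective C(X, ℝ) (continuousSections F V) := by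
  obtain ⟨n, p, σ, hσ, hsum⟩ := exists_sq_partition F V
  let b := Module.finBasis ℝ F
  let ι := Fin n × Fin (Module.finrank ℝ F)
  -- The family `g` and the functionals `φ` form a finite dual basis: `s = ∑ k, φ k s • g k`.
  let g : ι → continuousSections F V := fun k => cutoffSection _ (σ k.1) (hσ k.1) (b k.2)
  let φ : ι → continuousSections F V →ₗ[C(X, ℝ)] C(X, ℝ) := fun k =>
    cutoffCoord _ (σ k.1) (hσ k.1) (LinearMap.toContinuousLinearMap (b.coord k.2))
  let P : (ι → C(X, ℝ)) →ₗ[C(X, ℝ)] continuousSections F V := Fintype.linearCombination C(X, ℝ) g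
  let Q : continuousSections F V →ₗ[C(X, ℝ)] (ι → C(X, ℝ)) := LinearMap.pi φ
  have hPQ : P ∘ₗ Q = LinearMap.id := by
    ext s x
    have h₁ : (P (Q s)).1 x = ∑ k : ι, φ k s x • (g k).1 x := by
      simp only [P, Q, Fintype.linearCombination_apply, LinearMap.pi_apply]
      rw [AddSubmonoidClass.coe_finsetSum, Finset.sum_apply]
      rfl
    have h₂ : ∀ i : Fin n, ∑ j, φ (i, j) s x • (g (i, j)).1 x = (σ i x * σ i x) • s.1 x := by
      intro i
      set e := trivializationAt F V (p i)
      have h₃ : ∀ j, φ (i, j) s x • (g (i, j)).1 x =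
          (σ i x * σ i x) • e.symmₗ ℝ x (b.repr (e.linearMapAt ℝ x (s.1 x)) j • b j) := by
        intro j
        change (σ i x * b.repr (e.linearMapAt ℝ x (s.1 x)) j) • σ i x • e.symmₗ ℝ x (b j) = _
        rw [map_smul, smul_smul, smul_smul]
        congr 1
        ring
      rw [Finset.sum_congr rfl fun j _ => h₃ j, ← Finset.smul_sum, ← map_sum, b.sum_repr]
      by_cases hx : x ∈ e.baseSet
      · rw [e.symmₗ_linearMapAt hx]
      · have : σ i x = 0 := image_eq_zero_of_notMem_tsupport fun h => hx (hσ i h)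
        simp [this]
    change (P (Q s)).1 x = s.1 x
    rw [h₁, Fintype.sum_prod_type, Finset.sum_congr rfl fun i _ => h₂ i, ← Finset.sum_smul,
      hsum, one_smul]
  exact ⟨Module.Finite.of_surjective P fun s => ⟨Q s, LinearMap.congr_fun hPQ s⟩,
    Module.Projective.of_split Q P hPQ⟩

end
end
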